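/- arXiv:2307.09498 — 2 statements merged into one kernel-verified Lean document; each statement's English description precedes it below -/
import Mathlib

section
/- Let J be a real N×N matrix, f, u₀, w ∈ ℝᴺ, h ≥ 0, γ ∈ ℝ, C ≥ 0, ε ≥ 0, and let δ be a real N×N matrix with ‖δ‖₂ ≤ ε. Define u₁ = u₀ + h·φ₁(hJ)f and ũ₁ = u₀ + h·γ·f + (I + δ)·(h·(φ₁(hJ) − γI)f). If ‖u₁ − w‖₂ ≤ C·h³, then the one-step error of the mixed precision scheme relative to w satisfies ‖ũ₁ − w‖₂ ≤ C·h³ + h·ε·‖φ₁(hJ)f − γ·f‖₂. -/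
/-- `φ_k(A) = ∑_{n=0}^∞ Aⁿ/(n+k)!` for a real square matrix `A`. -/
noncomputable def phiM {N : ℕ} (k : ℕ) (A : Matrix (Fin N) (Fin N) ℝ) :
    Matrix (Fin N) (Fin N) ℝ :=
  ∑' n : ℕ, (((n + k).factorial : ℝ))⁻¹ • A ^ n

/-- Action of a matrix on a vector of Euclidean space (matrix-vector product). -/
noncomputable def mvE {N : ℕ} (A : Matrix (Fin N) (Fin N) ℝ)
    (x : EuclideanSpace ℝ (Fin N)) : EuclideanSpace ℝ (Fin N) :=
  Matrix.toEuclideanCLM (𝕜 := ℝ) A x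

/-- The operator 2-norm of a real matrix (norm induced by the Euclidean vector norm). -/
noncomputable def opN {N : ℕ} (A : Matrix (Fin N) (Fin N) ℝ) : ℝ :=
  ‖Matrix.toEuclideanCLM (𝕜 := ℝ) A‖

/-- If the exact exponential Rosenbrock–Euler step `u₁ = u₀ + h·φ₁(hJ)f` satisfies the
local error bound `‖u₁ − w‖₂ ≤ C·h³`, then the mixed precision step
`ũ₁ = u₀ + h·γ·f + (I + δ)(h·(φ₁(hJ) − γI)f)` with `‖δ‖₂ ≤ ε` satisfies
`‖ũ₁ − w‖₂ ≤ C·h³ + h·ε·‖φ₁(hJ)f − γ·f‖₂`. -/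
theorem stmt_4 {N : ℕ} (J : Matrix (Fin N) (Fin N) ℝ)
    (f u₀ w : EuclideanSpace ℝ (Fin N)) (h : ℝ) (hh : 0 ≤ h) (γ : ℝ)
    (C : ℝ) (hC : 0 ≤ C) (ε : ℝ) (hε : 0 ≤ ε)
    (δ : Matrix (Fin N) (Fin N) ℝ) (hδ : opN δ ≤ ε)
    (hu₁ : ‖(u₀ + h • mvE (phiM 1 (h • J)) f) - w‖ ≤ C * h ^ 3) :
    ‖(u₀ + (h * γ) • f + mvE (1 + δ) (h • (mvE (phiM 1 (h • J)) f - γ • f))) - w‖ ≤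
      C * h ^ 3 + h * ε * ‖mvE (phiM 1 (h • J)) f - γ • f‖ := by
  generalize mvE (phiM 1 (h • J)) f = p at *
  have key : (u₀ + (h * γ) • f + mvE (1 + δ) (h • (p - γ • f))) - w
      = ((u₀ + h • p) - w) + h • mvE δ (p - γ • f) := by
    have e : mvE (1 + δ) (h • (p - γ • f))
        = h • (p - γ • f) + h • mvE δ (p - γ • f) := by
      simp only [mvE, map_add, map_one, map_smul, ContinuousLinearMap.add_apply,
        ContinuousLinearMap.one_apply, smul_add]
    rw [e]
    module
  have hb : ‖mvE δ (p - γ • f)‖ ≤ ε * ‖p - γ • f‖ :=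
    (ContinuousLinearMap.le_opNorm _ _).trans
      (mul_le_mul_of_nonneg_right hδ (norm_nonneg _))
  rw [key]
  refine (norm_add_le _ _).trans (add_le_add hu₁ ?_)
  rw [norm_smul, Real.norm_of_nonneg hh, mul_assoc]
  exact mul_le_mul_of_nonneg_left hb hh
end

section
/- Inexact Arnoldi relation: let A be a real N×N matrix, let v₁, …, v_{m+1} ∈ ℝᴺ be orthonormal vectors, let E₁, …, E_m be real N×N perturbation matrices, and let H be a real (m+1)×m matrix such that for every j with 1 ≤ j ≤ m, (A + E_j)·v_j = ∑_{i=1}^{j+1} H_{i,j}·v_i and H_{i,j} = 0 for i > j+1. Define the aggregate perturbation ℰ_m = ∑_{j=1}^m E_j·v_j·v_jᵀ, let V_m be the N×m matrix with columns v₁, …, v_m, and let H_m be the top m×m block of H. Then (A + ℰ_m)·V_m = V_m·H_m + H_{m+1,m}·v_{m+1}·e_mᵀ, where e_m is the m-th standard basis vector of ℝᵐ. -/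
open Matrix

/-- Inexact Arnoldi relation: if orthonormal vectors `v₁, …, v_{m+1}` (here indexed by
`Fin (m+2)` with `m+1` playing the role of the paper's `m ≥ 1`) satisfy
`(A + E_j)·v_j = ∑_{i=1}^{j+1} H_{i,j}·v_i` with `H` of Hessenberg form, then with
`ℰ_m = ∑_j E_j·v_j·v_jᵀ`, `V_m = [v₁ ⋯ v_m]`, and `H_m` the top square block of `H`,
`(A + ℰ_m)·V_m = V_m·H_m + H_{m+1,m}·v_{m+1}·e_mᵀ`. -/
theorem stmt_15 {N m : ℕ}
    (A : Matrix (Fin N) (Fin N) ℝ)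
    (v : Fin (m + 2) → Fin N → ℝ)
    (hortho : ∀ i j : Fin (m + 2), v i ⬝ᵥ v j = if i = j then (1 : ℝ) else 0)
    (E : Fin (m + 1) → Matrix (Fin N) (Fin N) ℝ)
    (H : Matrix (Fin (m + 2)) (Fin (m + 1)) ℝ)
    (hArnoldi : ∀ j : Fin (m + 1),
      (A + E j).mulVec (v j.castSucc) = ∑ i : Fin (m + 2), H i j • v i)
    (hHess : ∀ (i : Fin (m + 2)) (j : Fin (m + 1)), (j : ℕ) + 1 < (i : ℕ) → H i j = 0) :
    let V : Matrix (Fin N) (Fin (m + 1)) ℝ := Matrix.of fun i j => v j.castSucc i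
    let Hm : Matrix (Fin (m + 1)) (Fin (m + 1)) ℝ := H.submatrix Fin.castSucc id
    let ℰ : Matrix (Fin N) (Fin N) ℝ :=
      ∑ j : Fin (m + 1), E j * Matrix.vecMulVec (v j.castSucc) (v j.castSucc)
    (A + ℰ) * V = V * Hm +
      H (Fin.last (m + 1)) (Fin.last m) •
        Matrix.vecMulVec (v (Fin.last (m + 1))) (Pi.single (Fin.last m) 1) := by
  intro V Hm ℰ
  have hℰ : ∀ j : Fin (m + 1), ℰ.mulVec (v j.castSucc) = (E j).mulVec (v j.castSucc) := by
    intro j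
    have h1 : ∀ k : Fin (m + 1),
        (E k * Matrix.vecMulVec (v k.castSucc) (v k.castSucc)).mulVec (v j.castSucc)
          = if k = j then (E k).mulVec (v k.castSucc) else 0 := by
      intro k
      rw [← Matrix.mulVec_mulVec, Matrix.vecMulVec_mulVec, hortho]
      by_cases h : k = j
      · simp [h]
      · simp [h]
    simp only [ℰ, Matrix.sum_mulVec, h1]
    simp
  ext i j
  have hL : ((A + ℰ) * V) i j = ((A + ℰ).mulVec (v j.castSucc)) i := rfl
  rw [hL, Matrix.add_mulVec, hℰ, ← Matrix.add_mulVec, hArnoldi, Fin.sum_univ_castSucc]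
  have hlast : H (Fin.last (m + 1)) j * v (Fin.last (m + 1)) i
      = H (Fin.last (m + 1)) (Fin.last m) *
        (v (Fin.last (m + 1)) i * (Pi.single (Fin.last m) (1 : ℝ) : Fin (m + 1) → ℝ) j) := by
    by_cases h : j = Fin.last m
    · subst h; simp
    · have hlt : (j : ℕ) < m := Fin.val_lt_last h
      rw [hHess _ j (by simpa using hlt), Pi.single_eq_of_ne h]
      simp
  simp only [Pi.add_apply, Finset.sum_apply, Pi.smul_apply, smul_eq_mul, Matrix.add_apply,
    Matrix.smul_apply, Matrix.vecMulVec_apply, hlast, Matrix.mul_apply]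
  congr 1
  refine Finset.sum_congr rfl fun k _ => ?_
  simp [V, Hm, mul_comm]
end
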